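/- arXiv:1602.05940 — 3 statements merged into one kernel-verified Lean document; each statement's English description precedes it below -/
import Mathlib

section
/- For every OCA A over a nonempty finite alphabet Σ there exists a deterministic OCA A' over Σ such that L_obs(A') = L_obs(A) and L_vis(A') ⊆ Enc_Σ. -/
/-! Common framework: one-counter automata (OCAs) over a finite alphabet,
with the classical (`oca`), visibly (`vis`) and observability (`obs`) semantics. -/

/-- Letters from an alphabet `α` together with the two counter operations
`inc` and `dec`. -/
inductive Vis (α : Type*) : Type _ where
  | sym : α → Vis α
  | inc : Vis α
  | dec : Vis α

/-- A one-counter automaton (an `m`-OCA) over alphabet `α` with state set `Q`: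
an initial state, a set of final states, a threshold `m`, and a transition
relation `Δ ⊆ Q × {0,…,m} × (α ∪ {inc,dec}) × Q`. -/
structure OCA (Q : Type*) (α : Type*) where
  init : Q
  final : Set Q
  m : ℕ
  Δ : Set (Q × ℕ × Vis α × Q)
  valid : ∀ t ∈ Δ, t.2.1 ≤ m

variable {Q α : Type*}

/-- One step of an OCA, labeled by an element of `(α × ℕ) ∪ {inc, dec}`. -/
def OCA.step (A : OCA Q α) : Q × ℕ → Vis (α × ℕ) → Q × ℕ → Prop
  | (q, x), Vis.inc, (q', x') => x' = x + 1 ∧ (q, min x A.m, Vis.inc, q') ∈ A.Δ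
  | (q, x), Vis.dec, (q', x') => 1 ≤ x ∧ x' = x - 1 ∧ (q, min x A.m, Vis.dec, q') ∈ A.Δ
  | (q, x), Vis.sym (a, y), (q', x') => y = x ∧ x' = x ∧ (q, min x A.m, Vis.sym a, q') ∈ A.Δ

/-- `A.RunFrom c ts cs` holds if there is a partial run of `A` starting in
configuration `c`, with trace `ts`, visiting exactly the configurations
listed in `cs` (starting with `c`). -/
inductive OCA.RunFrom (A : OCA Q α) : Q × ℕ → List (Vis (α × ℕ)) → List (Q × ℕ) → Prop
  | nil (c : Q × ℕ) : OCA.RunFrom A c [] [c]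
  | cons {c c' : Q × ℕ} {τ : Vis (α × ℕ)} {ts : List (Vis (α × ℕ))} {cs : List (Q × ℕ)} :
      A.step c τ c' → OCA.RunFrom A c' ts cs → OCA.RunFrom A c (τ :: ts) (c :: cs)

/-- `ts` is the trace of some accepting run of `A` (a run starting in the
initial configuration `(ι,0)` whose last configuration has a final state). -/
def OCA.AccTrace (A : OCA Q α) (ts : List (Vis (α × ℕ))) : Prop :=
  ∃ cs c, A.RunFrom (A.init, 0) ts cs ∧ cs.getLast? = some c ∧ c.1 ∈ A.final

/-- Projection of a trace letter used for the visibly semantics: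
`(a,x)` becomes `a`, and `inc`/`dec` are kept. -/
def visOf : Vis (α × ℕ) → Vis α
  | Vis.sym (a, _) => Vis.sym a
  | Vis.inc => Vis.inc
  | Vis.dec => Vis.dec

/-- The visibly projection of a trace. -/
def visMap (ts : List (Vis (α × ℕ))) : List (Vis α) := ts.map visOf

/-- The observability projection of a trace: keep the pairs `(a,x)`,
erase `inc`/`dec`. -/
def obsMap (ts : List (Vis (α × ℕ))) : List (α × ℕ) :=
  ts.filterMap fun τ => match τ with
    | Vis.sym p => some p
    | _ => none

/-- The classical projection of a trace: `(a,x)` becomes `a`,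
`inc`/`dec` are erased. -/
def ocaMap (ts : List (Vis (α × ℕ))) : List α :=
  ts.filterMap fun τ => match τ with
    | Vis.sym (a, _) => some a
    | _ => none

/-- The visibly semantics `L_vis(A)`. -/
def OCA.Lvis (A : OCA Q α) : Set (List (Vis α)) :=
  {w | ∃ ts, A.AccTrace ts ∧ visMap ts = w}

/-- The observability semantics `L_obs(A)`. -/
def OCA.Lobs (A : OCA Q α) : Set (List (α × ℕ)) :=
  {w | ∃ ts, A.AccTrace ts ∧ obsMap ts = w}

/-- The classical semantics `L_oca(A)`. -/
def OCA.Loca (A : OCA Q α) : Set (List α) :=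
  {w | ∃ ts, A.AccTrace ts ∧ ocaMap ts = w}

/-- An OCA is deterministic if for every state `q`, counter test `k ≤ m` and
letter `σ ∈ α ∪ {inc,dec}` there is exactly one target state. -/
def OCA.Deterministic (A : OCA Q α) : Prop :=
  ∀ (q : Q) (k : ℕ) (σ : Vis α), k ≤ A.m → ∃! q' : Q, (q, k, σ, q') ∈ A.Δ

/-- Test for the letter `inc`. -/
def isIncB : Vis α → Bool
  | Vis.inc => true
  | _ => false

/-- Test for the letter `dec`. -/
def isDecB : Vis α → Bool
  | Vis.dec => true
  | _ => false

/-- Well-formed words over `α ∪ {inc,dec}`: no prefix contains more `dec`'s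
than `inc`'s. -/
def WFWords (α : Type*) : Set (List (Vis α)) :=
  {w | ∀ p, p <+: w → p.countP isDecB ≤ p.countP isIncB}

/-- `encFrom x0 w` encodes `w ∈ (α × ℕ)*` starting from previous counter
value `x0`: each `(a,x)` becomes `inc^(x-x0) a` (if `x ≥ x0`) or
`dec^(x0-x) a` (otherwise). -/
def encFrom : ℕ → List (α × ℕ) → List (Vis α)
  | _, [] => []
  | x0, (a, x) :: w =>
      (if x0 ≤ x then List.replicate (x - x0) Vis.inc
       else List.replicate (x0 - x) Vis.dec) ++ Vis.sym a :: encFrom x w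

/-- The encoding `enc : (α × ℕ)* → (α ∪ {inc,dec})*`. -/
def enc (w : List (α × ℕ)) : List (Vis α) := encFrom 0 w

/-- The set `Enc_α` of valid encodings. -/
def EncSet (α : Type*) : Set (List (Vis α)) := Set.range (enc (α := α))

/-- A set `S ⊆ ℕ` is ultimately periodic if there are `t` and `d ≥ 1` such
that for all `x ≥ t`, `x ∈ S ↔ x + d ∈ S`. -/
def UltPeriodic (S : Set ℕ) : Prop :=
  ∃ t d : ℕ, 1 ≤ d ∧ ∀ x : ℕ, t ≤ x → (x ∈ S ↔ x + d ∈ S)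

/-- An extended OCA (eOCA): transitions are guarded by ultimately periodic
sets of counter values, and acceptance is given by an ultimately periodic set
of counter values for each state. -/
structure EOCA (Q : Type*) (α : Type*) where
  init : Q
  f : Q → Set ℕ
  hf : ∀ q, UltPeriodic (f q)
  Δ : Set (Q × Set ℕ × Vis α × Q)
  hΔfin : Δ.Finite
  hΔup : ∀ t ∈ Δ, UltPeriodic t.2.1

/-- One step of an eOCA. -/
def EOCA.step (A : EOCA Q α) : Q × ℕ → Vis (α × ℕ) → Q × ℕ → Prop
  | (q, x), Vis.inc, (q', x') =>
      x' = x + 1 ∧ ∃ S, (q, S, Vis.inc, q') ∈ A.Δ ∧ x ∈ S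
  | (q, x), Vis.dec, (q', x') =>
      1 ≤ x ∧ x' = x - 1 ∧ ∃ S, (q, S, Vis.dec, q') ∈ A.Δ ∧ x ∈ S
  | (q, x), Vis.sym (a, y), (q', x') =>
      y = x ∧ x' = x ∧ ∃ S, (q, S, Vis.sym a, q') ∈ A.Δ ∧ x ∈ S

/-- Partial runs of an eOCA, as for OCAs. -/
inductive EOCA.RunFrom (A : EOCA Q α) : Q × ℕ → List (Vis (α × ℕ)) → List (Q × ℕ) → Prop
  | nil (c : Q × ℕ) : EOCA.RunFrom A c [] [c]
  | cons {c c' : Q × ℕ} {τ : Vis (α × ℕ)} {ts : List (Vis (α × ℕ))} {cs : List (Q × ℕ)} :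
      A.step c τ c' → EOCA.RunFrom A c' ts cs → EOCA.RunFrom A c (τ :: ts) (c :: cs)

/-- Accepting traces of an eOCA: the last configuration `(q,x)` satisfies
`x ∈ f q`. -/
def EOCA.AccTrace (A : EOCA Q α) (ts : List (Vis (α × ℕ))) : Prop :=
  ∃ cs c, A.RunFrom (A.init, 0) ts cs ∧ cs.getLast? = some c ∧ c.2 ∈ A.f c.1

/-- The visibly semantics of an eOCA. -/
def EOCA.Lvis (A : EOCA Q α) : Set (List (Vis α)) :=
  {w | ∃ ts, A.AccTrace ts ∧ visMap ts = w}

/-- The observability semantics of an eOCA. -/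
def EOCA.Lobs (A : EOCA Q α) : Set (List (α × ℕ)) :=
  {w | ∃ ts, A.AccTrace ts ∧ obsMap ts = w}

/-- The classical semantics of an eOCA. -/
def EOCA.Loca (A : EOCA Q α) : Set (List α) :=
  {w | ∃ ts, A.AccTrace ts ∧ ocaMap ts = w}

/-!
Call the `inc`/`dec` steps of `A` silent. If two levels `t < t + d` at or above the threshold have
the same silent loops `(p, x) ⟶* (q, x)` and the same states from which a final state is silently
reachable, then a silent path above level `t` can be shifted by `d`: steps above `t` do not test
the counter, and each excursion below `t` is a loop at level `t`. By the pigeonhole principle such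
levels exist, so silent reachability is periodic above `t`.

A subset construction that only follows valid encodings then yields a deterministic machine for
`enc '' L_obs(A)` whose transitions depend periodically on the counter value; a finite control that
stores the counter value modulo this periodicity turns it into a deterministic OCA. Since the trace
of a run is determined by its visible word, `L_obs` is a function of `L_vis`, and decoding
`enc '' L_obs(A)` gives back `L_obs(A)`.
-/

universe u

/-! ### Visible words -/

namespace Vis

/-- The effect of a letter on the counter. -/
def shift : Vis α → ℕ → ℕ
  | sym _, x => x
  | inc, x => x + 1
  | dec, x => x - 1

/-- A letter is enabled at counter value `x` unless it would make the counter negative. -/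
def Enabled : Vis α → ℕ → Prop
  | dec, x => 1 ≤ x
  | _, _ => True

end Vis

/-- The observation word of a visible word read from counter value `x`. -/
def observeFrom : ℕ → List (Vis α) → List (α × ℕ)
  | _, [] => []
  | x, .sym a :: v => (a, x) :: observeFrom x v
  | x, .inc :: v => observeFrom (x + 1) v
  | x, .dec :: v => observeFrom (x - 1) v

theorem observeFrom_replicate_inc_append (n x : ℕ) (v : List (Vis α)) :
    observeFrom x (List.replicate n .inc ++ v) = observeFrom (x + n) v := by
  induction n generalizing x with
  | zero => rfl
  | succ n ih =>
    rw [List.replicate_succ, List.cons_append, observeFrom, ih, add_assoc, add_comm 1]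

theorem observeFrom_replicate_dec_append (n x : ℕ) (v : List (Vis α)) :
    observeFrom x (List.replicate n .dec ++ v) = observeFrom (x - n) v := by
  induction n generalizing x with
  | zero => rfl
  | succ n ih =>
    rw [List.replicate_succ, List.cons_append, observeFrom, ih, Nat.sub_sub, add_comm 1]

theorem observeFrom_encFrom (x : ℕ) (w : List (α × ℕ)) : observeFrom x (encFrom x w) = w := by
  induction w generalizing x with
  | nil => rfl
  | cons p w ih =>
    obtain ⟨a, z⟩ := p
    rw [encFrom]
    split_ifs with h
    · rw [observeFrom_replicate_inc_append, Nat.add_sub_cancel' h, observeFrom, ih]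
    · rw [observeFrom_replicate_dec_append, Nat.sub_sub_self (by lia), observeFrom, ih]

theorem encFrom_cons_self (x : ℕ) (a : α) (w : List (α × ℕ)) :
    encFrom x ((a, x) :: w) = .sym a :: encFrom x w := by
  simp [encFrom]

theorem encFrom_cons_of_lt {x z : ℕ} (h : x < z) (a : α) (w : List (α × ℕ)) :
    encFrom x ((a, z) :: w) = .inc :: encFrom (x + 1) ((a, z) :: w) := by
  obtain ⟨n, rfl⟩ := Nat.exists_eq_add_of_lt h
  simp [encFrom, List.replicate_succ, show x + n + 1 - x = n + 1 by lia,
    show x + n + 1 - (x + 1) = n by lia, show x ≤ x + n + 1 by lia]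

theorem encFrom_cons_of_gt {x z : ℕ} (h : z < x) (a : α) (w : List (α × ℕ)) :
    encFrom x ((a, z) :: w) = .dec :: encFrom (x - 1) ((a, z) :: w) := by
  obtain ⟨n, rfl⟩ := Nat.exists_eq_add_of_lt h
  cases n <;> simp [encFrom, List.replicate_succ, add_assoc]

theorem encFrom_eq_nil_iff {x : ℕ} {w : List (α × ℕ)} : encFrom x w = [] ↔ w = [] := by
  cases w <;> simp [encFrom]

theorem encFrom_eq_sym_cons_iff {x : ℕ} {w : List (α × ℕ)} {a : α} {v : List (Vis α)} :
    encFrom x w = .sym a :: v ↔ ∃ w', w = (a, x) :: w' ∧ encFrom x w' = v := by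
  rcases w with _ | ⟨⟨b, z⟩, w⟩
  · simp [encFrom]
  rcases lt_trichotomy x z with h | rfl | h
  · simp [encFrom_cons_of_lt h, h.ne']
  · simp [encFrom_cons_self, and_assoc]
  · simp [encFrom_cons_of_gt h, h.ne]

theorem encFrom_eq_inc_cons_iff {x : ℕ} {w : List (α × ℕ)} {v : List (Vis α)} :
    encFrom x w = .inc :: v ↔ (∃ p ∈ w.head?, x < p.2) ∧ encFrom (x + 1) w = v := by
  rcases w with _ | ⟨⟨b, z⟩, w⟩
  · simp [encFrom]
  rcases lt_trichotomy x z with h | rfl | h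
  · simp [encFrom_cons_of_lt h, h]
  · simp [encFrom_cons_self]
  · simp [encFrom_cons_of_gt h, h.le]

theorem encFrom_eq_dec_cons_iff {x : ℕ} {w : List (α × ℕ)} {v : List (Vis α)} :
    encFrom x w = .dec :: v ↔ (∃ p ∈ w.head?, p.2 < x) ∧ encFrom (x - 1) w = v := by
  rcases w with _ | ⟨⟨b, z⟩, w⟩
  · simp [encFrom]
  rcases lt_trichotomy x z with h | rfl | h
  · simp [encFrom_cons_of_lt h, h.le]
  · simp [encFrom_cons_self]
  · simp [encFrom_cons_of_gt h, h]

/-- If `s = 1` (`s = -1`), the next letter of `w` occurs at a counter value at least (at most) `x`: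
exactly these words `w` have an encoding from `x` that may follow an `inc` (a `dec`). -/
def HeadsToward (s : SignType) (x : ℕ) (w : List (α × ℕ)) : Prop :=
  (s = 1 → ∃ o ∈ w.head?, x ≤ o.2) ∧ (s = -1 → ∃ o ∈ w.head?, o.2 ≤ x)

section HeadsToward

variable {s : SignType} {x : ℕ} {w : List (α × ℕ)} {v : List (Vis α)}

theorem headsToward_zero : HeadsToward 0 x w := by
  simp [HeadsToward]

theorem headsToward_and_encFrom_eq_nil_iff :
    HeadsToward s x w ∧ encFrom x w = [] ↔ s = 0 ∧ w = [] := by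
  rw [encFrom_eq_nil_iff, and_congr_left_iff]
  rintro rfl
  cases s <;> simp [HeadsToward]

theorem headsToward_and_encFrom_eq_sym_cons_iff {a : α} :
    HeadsToward s x w ∧ encFrom x w = .sym a :: v ↔
      ∃ w', w = (a, x) :: w' ∧ encFrom x w' = v := by
  rw [encFrom_eq_sym_cons_iff, and_iff_right_iff_imp]
  rintro ⟨w', rfl, -⟩
  simp [HeadsToward]

theorem headsToward_and_encFrom_eq_inc_cons_iff :
    HeadsToward s x w ∧ encFrom x w = .inc :: v ↔
      s ≠ -1 ∧ HeadsToward 1 (x + 1) w ∧ encFrom (x + 1) w = v := by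
  rw [encFrom_eq_inc_cons_iff]
  rcases w with _ | ⟨⟨a, z⟩, w⟩
  · simp [HeadsToward]
  cases s <;> simp [HeadsToward] <;> lia

theorem headsToward_and_encFrom_eq_dec_cons_iff :
    HeadsToward s x w ∧ encFrom x w = .dec :: v ↔
      1 ≤ x ∧ s ≠ 1 ∧ HeadsToward (-1) (x - 1) w ∧ encFrom (x - 1) w = v := by
  rw [encFrom_eq_dec_cons_iff]
  rcases w with _ | ⟨⟨a, z⟩, w⟩
  · simp [HeadsToward]
  cases s <;> simp [HeadsToward] <;> lia

end HeadsToward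

namespace OCA

variable {A : OCA Q α}

/-! ### Acceptance of traces, visible words and observation words -/

/-- `AccTrace` from an arbitrary configuration. -/
def AccFrom (A : OCA Q α) (c : Q × ℕ) (ts : List (Vis (α × ℕ))) : Prop :=
  ∃ cs c', A.RunFrom c ts cs ∧ cs.getLast? = some c' ∧ c'.1 ∈ A.final

theorem accFrom_nil_iff {c : Q × ℕ} : A.AccFrom c [] ↔ c.1 ∈ A.final := by
  constructor
  · rintro ⟨_, c', ⟨⟩, hlast, hfinal⟩
    obtain rfl : c = c' := by simpa using hlast
    exact hfinal
  · exact fun h => ⟨[c], c, .nil c, rfl, h⟩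

theorem RunFrom.getLast?_cons {c c' : Q × ℕ} {ts : List (Vis (α × ℕ))} {cs : List (Q × ℕ)}
    (h : A.RunFrom c ts cs) : (c' :: cs).getLast? = cs.getLast? := by
  cases h <;> exact List.getLast?_cons_cons

theorem accFrom_cons_iff {c : Q × ℕ} {τ : Vis (α × ℕ)} {ts : List (Vis (α × ℕ))} :
    A.AccFrom c (τ :: ts) ↔ ∃ c', A.step c τ c' ∧ A.AccFrom c' ts := by
  constructor
  · rintro ⟨_, e, _ | ⟨hstep, hrun⟩, hlast, hfinal⟩
    exact ⟨_, hstep, _, e, hrun, hrun.getLast?_cons ▸ hlast, hfinal⟩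
  · rintro ⟨_, hstep, _, e, hrun, hlast, hfinal⟩
    exact ⟨_, e, .cons hstep hrun, hrun.getLast?_cons.trans hlast, hfinal⟩

/-- Acceptance of a visible word from a given configuration. -/
def VisAccepts (A : OCA Q α) : Q × ℕ → List (Vis α) → Prop
  | c, [] => c.1 ∈ A.final
  | c, σ :: v => σ.Enabled c.2 ∧
      ∃ q, (c.1, min c.2 A.m, σ, q) ∈ A.Δ ∧ A.VisAccepts (q, σ.shift c.2) v

theorem AccFrom.visAccepts {c : Q × ℕ} {ts : List (Vis (α × ℕ))} (h : A.AccFrom c ts) :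
    A.VisAccepts c (visMap ts) ∧ observeFrom c.2 (visMap ts) = obsMap ts := by
  induction ts generalizing c with
  | nil => exact ⟨accFrom_nil_iff.1 h, rfl⟩
  | cons τ ts ih =>
    obtain ⟨⟨q, x⟩, hstep, h⟩ := accFrom_cons_iff.1 h
    obtain ⟨hacc, hobs⟩ := ih h
    rcases τ with ⟨a, y⟩ | _ | _
    · obtain ⟨rfl, rfl, hΔ⟩ := hstep
      exact ⟨⟨trivial, q, hΔ, hacc⟩, congrArg ((a, c.2) :: ·) hobs⟩
    · obtain ⟨rfl, hΔ⟩ := hstep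
      exact ⟨⟨trivial, q, hΔ, hacc⟩, hobs⟩
    · obtain ⟨hpos, rfl, hΔ⟩ := hstep
      exact ⟨⟨hpos, q, hΔ, hacc⟩, hobs⟩

theorem VisAccepts.exists_accFrom {c : Q × ℕ} {v : List (Vis α)} (h : A.VisAccepts c v) :
    ∃ ts, A.AccFrom c ts ∧ visMap ts = v := by
  induction v generalizing c with
  | nil => exact ⟨[], accFrom_nil_iff.2 h, rfl⟩
  | cons σ v ih =>
    obtain ⟨hen, q, hΔ, h⟩ := h
    obtain ⟨ts, hacc, rfl⟩ := ih h
    obtain ⟨p, x⟩ := c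
    cases σ with
    | sym a => exact ⟨.sym (a, x) :: ts, accFrom_cons_iff.2 ⟨_, ⟨rfl, rfl, hΔ⟩, hacc⟩, rfl⟩
    | inc => exact ⟨.inc :: ts, accFrom_cons_iff.2 ⟨_, ⟨rfl, hΔ⟩, hacc⟩, rfl⟩
    | dec => exact ⟨.dec :: ts, accFrom_cons_iff.2 ⟨_, ⟨hen, rfl, hΔ⟩, hacc⟩, rfl⟩

theorem mem_Lvis_iff {v : List (Vis α)} : v ∈ A.Lvis ↔ A.VisAccepts (A.init, 0) v := by
  constructor
  · rintro ⟨ts, h, rfl⟩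
    exact (AccFrom.visAccepts h).1
  · exact VisAccepts.exists_accFrom

theorem Lobs_eq_image_Lvis (A : OCA Q α) : A.Lobs = observeFrom 0 '' A.Lvis := by
  ext w
  constructor
  · rintro ⟨ts, h, rfl⟩
    exact ⟨visMap ts, ⟨ts, h, rfl⟩, (AccFrom.visAccepts h).2⟩
  · rintro ⟨_, ⟨ts, h, rfl⟩, rfl⟩
    exact ⟨ts, h, (AccFrom.visAccepts h).2.symm⟩

theorem Lobs_eq_of_Lvis_eq_enc_image {L : Set (List (α × ℕ))} (h : A.Lvis = enc '' L) :
    A.Lobs = L := by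
  have decode : Function.LeftInverse (observeFrom 0) (enc (α := α)) := observeFrom_encFrom 0
  rw [Lobs_eq_image_Lvis, h, decode.image_image]

/-- A step of `A` that changes the counter; such steps do not show in the observation word. -/
inductive SilentStep (A : OCA Q α) : Q × ℕ → Q × ℕ → Prop
  | inc {p q : Q} {x : ℕ} : (p, min x A.m, .inc, q) ∈ A.Δ → SilentStep A (p, x) (q, x + 1)
  | dec {p q : Q} {x : ℕ} : (p, min (x + 1) A.m, .dec, q) ∈ A.Δ → SilentStep A (p, x + 1) (q, x)

/-- Reachability by silent steps. -/
abbrev Silent (A : OCA Q α) : Q × ℕ → Q × ℕ → Prop :=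
  Relation.ReflTransGen A.SilentStep

/-- The configurations from which a final state is reachable by silent steps. -/
def CanFinish (A : OCA Q α) (c : Q × ℕ) : Prop :=
  ∃ c', A.Silent c c' ∧ c'.1 ∈ A.final

/-- Acceptance of an observation word from a given configuration. -/
def ObsAccepts (A : OCA Q α) : Q × ℕ → List (α × ℕ) → Prop
  | c, [] => A.CanFinish c
  | c, (a, x) :: w =>
      ∃ p q, A.Silent c (p, x) ∧ (p, min x A.m, .sym a, q) ∈ A.Δ ∧ A.ObsAccepts (q, x) w

theorem ObsAccepts.of_silent {c c' : Q × ℕ} {w : List (α × ℕ)} (h : A.Silent c c')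
    (hw : A.ObsAccepts c' w) : A.ObsAccepts c w := by
  rcases w with _ | ⟨⟨a, x⟩, w⟩
  · obtain ⟨e, he, hfinal⟩ := hw
    exact ⟨e, h.trans he, hfinal⟩
  · obtain ⟨p, q, hp, hpq⟩ := hw
    exact ⟨p, q, h.trans hp, hpq⟩

theorem VisAccepts.obsAccepts {c : Q × ℕ} {v : List (Vis α)} (h : A.VisAccepts c v) :
    A.ObsAccepts c (observeFrom c.2 v) := by
  induction v generalizing c with
  | nil => exact ⟨c, .refl, h⟩
  | cons σ v ih =>
    obtain ⟨p, x⟩ := c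
    obtain ⟨hen, q, hΔ, h⟩ := h
    cases σ with
    | sym a => exact ⟨p, q, .refl, hΔ, ih h⟩
    | inc => exact (ih h).of_silent (.single (.inc hΔ))
    | dec =>
      obtain ⟨x, rfl⟩ := Nat.exists_eq_add_of_le' hen
      exact (ih h).of_silent (.single (.dec hΔ))

theorem VisAccepts.exists_of_silent {c c' : Q × ℕ} {v : List (Vis α)} (h : A.Silent c c')
    (hv : A.VisAccepts c' v) :
    ∃ v', A.VisAccepts c v' ∧ observeFrom c.2 v' = observeFrom c'.2 v := by
  induction h using Relation.ReflTransGen.head_induction_on with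
  | refl => exact ⟨v, hv, rfl⟩
  | head hstep _ ih =>
    obtain ⟨v', hv', hobs⟩ := ih
    cases hstep with
    | inc hΔ => exact ⟨.inc :: v', ⟨trivial, _, hΔ, hv'⟩, hobs⟩
    | dec hΔ => exact ⟨.dec :: v', ⟨Nat.le_add_left _ _, _, hΔ, hv'⟩, hobs⟩

theorem ObsAccepts.exists_visAccepts {c : Q × ℕ} {w : List (α × ℕ)} (h : A.ObsAccepts c w) :
    ∃ v, A.VisAccepts c v ∧ observeFrom c.2 v = w := by
  induction w generalizing c with
  | nil =>
    obtain ⟨c', hc, hfinal⟩ := h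
    exact VisAccepts.exists_of_silent (v := []) hc hfinal
  | cons o w ih =>
    obtain ⟨a, x⟩ := o
    obtain ⟨p, q, hc, hΔ, h⟩ := h
    obtain ⟨v, hv, rfl⟩ := ih h
    exact VisAccepts.exists_of_silent (v := .sym a :: v) hc ⟨trivial, q, hΔ, hv⟩

theorem mem_Lobs_iff {w : List (α × ℕ)} : w ∈ A.Lobs ↔ A.ObsAccepts (A.init, 0) w := by
  rw [Lobs_eq_image_Lvis]
  constructor
  · rintro ⟨v, hv, rfl⟩
    exact (mem_Lvis_iff.1 hv).obsAccepts
  · intro h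
    obtain ⟨v, hv, hobs⟩ := h.exists_visAccepts
    exact ⟨v, mem_Lvis_iff.2 hv, hobs⟩

/-! ### Periodicity of silent reachability -/

theorem SilentStep.level {c c' : Q × ℕ} (h : A.SilentStep c c') :
    c'.2 = c.2 + 1 ∨ c.2 = c'.2 + 1 := by
  cases h <;> simp

theorem Silent.exists_level {c c' : Q × ℕ} (h : A.Silent c c') {y : ℕ}
    (hy : y ∈ Set.uIcc c.2 c'.2) : ∃ r, A.Silent c (r, y) ∧ A.Silent (r, y) c' := by
  induction h using Relation.ReflTransGen.head_induction_on with
  | refl =>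
    obtain rfl : y = c'.2 := by simpa using hy
    exact ⟨c'.1, .refl, .refl⟩
  | @head a b hstep hpath ih =>
    by_cases hya : y = a.2
    · subst hya
      exact ⟨a.1, .refl, .head hstep hpath⟩
    have hyb : y ∈ Set.uIcc b.2 c'.2 := by
      have := hstep.level
      rw [Set.mem_uIcc] at hy ⊢
      lia
    obtain ⟨r, hr, hrc⟩ := ih hyb
    exact ⟨r, .head hstep hr, hrc⟩

theorem obsAccepts_iff_exists_silent {q : Q} {x y : ℕ} {o : α × ℕ} {w : List (α × ℕ)}
    (ho : o ∈ w.head?) (hy : y ∈ Set.uIcc x o.2) :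
    A.ObsAccepts (q, x) w ↔ ∃ r, A.Silent (q, x) (r, y) ∧ A.ObsAccepts (r, y) w := by
  constructor
  · obtain ⟨w, rfl⟩ := List.head?_eq_some_iff.1 ho
    rintro ⟨p, q', hp, hpq'⟩
    obtain ⟨r, hqr, hrp⟩ := Silent.exists_level hp hy
    exact ⟨r, hqr, p, q', hrp, hpq'⟩
  · rintro ⟨r, hqr, hr⟩
    exact hr.of_silent hqr

theorem SilentStep.shift {x y j k : ℕ} (hx : A.m ≤ x) (hy : A.m ≤ y) {p q : Q}
    (h : A.SilentStep (p, x + j) (q, x + k)) : A.SilentStep (p, y + j) (q, y + k) := by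
  generalize hc : (p, x + j) = c, hc' : (q, x + k) = c' at h
  cases h with
  | inc hΔ =>
    obtain ⟨⟨rfl, rfl⟩, ⟨rfl, hk⟩⟩ := And.intro (Prod.mk.inj hc) (Prod.mk.inj hc')
    obtain rfl : k = j + 1 := by lia
    rw [min_eq_right (by lia)] at hΔ
    exact .inc (by rwa [min_eq_right (by lia)])
  | dec hΔ =>
    obtain ⟨⟨rfl, hj⟩, ⟨rfl, rfl⟩⟩ := And.intro (Prod.mk.inj hc) (Prod.mk.inj hc')
    obtain rfl : j = k + 1 := by lia
    rw [min_eq_right (by lia)] at hΔ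
    exact .dec (by rwa [min_eq_right (by lia)])

/-- The silent loops at level `x`, and the states that can finish from level `x`. -/
def profile (A : OCA Q α) (x : ℕ) : Set (Q × Q) × Set Q :=
  ({pq | A.Silent (pq.1, x) (pq.2, x)}, {p | A.CanFinish (p, x)})

theorem Silent.shift_or {x y j : ℕ} (hx : A.m ≤ x) (hy : A.m ≤ y)
    (hxy : A.profile x ≤ A.profile y) {p : Q} {c : Q × ℕ} (h : A.Silent (p, x + j) c) :
    (∃ k, c.2 = x + k ∧ A.Silent (p, y + j) (c.1, y + k)) ∨
      c.2 < x ∧ ∃ r, A.Silent (p, y + j) (r, y) ∧ A.Silent (r, x) c := by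
  induction h with
  | refl => exact .inl ⟨j, rfl, .refl⟩
  | @tail b c _ hstep ih =>
    obtain ⟨b, _⟩ := b
    obtain ⟨c, z⟩ := c
    rcases ih with ⟨k, rfl, hk⟩ | ⟨hlt, r, hr, hrb⟩
    · rcases le_or_gt x z with hz | hz
      · obtain ⟨l, rfl⟩ := Nat.exists_eq_add_of_le hz
        exact .inl ⟨l, rfl, hk.tail (hstep.shift hx hy)⟩
      · obtain rfl : k = 0 := by have := hstep.level; lia
        exact .inr ⟨hz, b, hk, .single hstep⟩
    · have hrc : A.Silent (r, x) (c, z) := hrb.tail hstep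
      rcases (show z ≤ x by have := hstep.level; lia).lt_or_eq with hz | rfl
      · exact .inr ⟨hz, r, hr, hrc⟩
      · exact .inl ⟨0, rfl, hr.trans (@hxy.1 (r, c) hrc)⟩

theorem Silent.shift {x y j k : ℕ} (hx : A.m ≤ x) (hy : A.m ≤ y)
    (hxy : A.profile x ≤ A.profile y) {p q : Q} (h : A.Silent (p, x + j) (q, x + k)) :
    A.Silent (p, y + j) (q, y + k) := by
  rcases h.shift_or hx hy hxy with ⟨l, hl, hpq⟩ | ⟨hlt, -⟩
  · obtain rfl : k = l := Nat.add_left_cancel hl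
    exact hpq
  · exact absurd hlt (by simp)

theorem CanFinish.shift {x y j : ℕ} (hx : A.m ≤ x) (hy : A.m ≤ y)
    (hxy : A.profile x ≤ A.profile y) {p : Q} (h : A.CanFinish (p, x + j)) :
    A.CanFinish (p, y + j) := by
  obtain ⟨c, hc, hfinal⟩ := h
  rcases Silent.shift_or hx hy hxy hc with ⟨k, -, hpc⟩ | ⟨-, r, hpr, hrc⟩
  · exact ⟨_, hpc, hfinal⟩
  · obtain ⟨e, hre, hfinal⟩ := @hxy.2 r ⟨c, hrc, hfinal⟩
    exact ⟨e, hpr.trans hre, hfinal⟩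

/-- Silent behaviour of `A` from level `t` on is invariant under shifting the counter by `d`. -/
structure IsSilentPeriod (A : OCA Q α) (t d : ℕ) : Prop where
  pos : 0 < d
  m_le : A.m ≤ t
  silent_iff {p q : Q} {x y : ℕ} (hx : t ≤ x) (hy : t ≤ y) :
    A.Silent (p, x + d) (q, y + d) ↔ A.Silent (p, x) (q, y)
  canFinish_iff {p : Q} {x : ℕ} (hx : t ≤ x) : A.CanFinish (p, x + d) ↔ A.CanFinish (p, x)

theorem isSilentPeriod_of_profile_eq {t d : ℕ} (hd : 0 < d) (ht : A.m ≤ t)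
    (h : A.profile t = A.profile (t + d)) : A.IsSilentPeriod t d where
  pos := hd
  m_le := ht
  silent_iff {p q x y} hx hy := by
    obtain ⟨j, rfl⟩ := Nat.exists_eq_add_of_le hx
    obtain ⟨k, rfl⟩ := Nat.exists_eq_add_of_le hy
    rw [add_right_comm t j, add_right_comm t k]
    exact ⟨Silent.shift (by lia) ht h.ge, Silent.shift ht (by lia) h.le⟩
  canFinish_iff {p x} hx := by
    obtain ⟨j, rfl⟩ := Nat.exists_eq_add_of_le hx
    rw [add_right_comm]
    exact ⟨CanFinish.shift (by lia) ht h.ge, CanFinish.shift ht (by lia) h.le⟩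

theorem exists_isSilentPeriod [Finite Q] (A : OCA Q α) : ∃ t d, A.IsSilentPeriod t d := by
  obtain ⟨i, j, hij, h⟩ := Finite.exists_ne_map_eq_of_infinite fun i => A.profile (A.m + i)
  wlog hlt : i < j generalizing i j
  · exact this j i hij.symm h.symm (by lia)
  refine ⟨A.m + i, j - i, isSilentPeriod_of_profile_eq (by lia) (by lia) ?_⟩
  rwa [show A.m + i + (j - i) = A.m + j by lia]

end OCA

/-! ### Deterministic machines with periodic counter tests -/

/-- The sequence `f` has period `d` from index `t` on. -/
def EventuallyPeriodic {β : Type*} (f : ℕ → β) (t d : ℕ) : Prop :=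
  ∀ x, t ≤ x → f (x + d) = f x

/-- The least `y` which every sequence of period `d` from index `t` on identifies with `x`. -/
def foldMod (t d x : ℕ) : ℕ := if x ≤ t then x else t + (x - t) % d

theorem foldMod_of_le {t d x : ℕ} (hx : x ≤ t) : foldMod t d x = x := if_pos hx

theorem foldMod_add (t d j : ℕ) : foldMod t d (t + j) = t + j % d := by
  cases j <;> simp [foldMod]

theorem foldMod_lt {t d : ℕ} (hd : 0 < d) (x : ℕ) : foldMod t d x < t + d := by
  rcases le_total x t with hx | hx
  · rw [foldMod_of_le hx]
    lia
  · obtain ⟨j, rfl⟩ := Nat.exists_eq_add_of_le hx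
    rw [foldMod_add]
    have := Nat.mod_lt j hd
    lia

theorem eventuallyPeriodic_foldMod (t d : ℕ) : EventuallyPeriodic (foldMod t d) t d := by
  intro x hx
  obtain ⟨j, rfl⟩ := Nat.exists_eq_add_of_le hx
  rw [add_assoc, foldMod_add, foldMod_add, Nat.add_mod_right]

theorem exists_eq_foldMod_add_mul {t x : ℕ} (d : ℕ) (hx : t ≤ x) :
    t ≤ foldMod t d x ∧ ∃ n, x = foldMod t d x + n * d := by
  obtain ⟨j, rfl⟩ := Nat.exists_eq_add_of_le hx
  rw [foldMod_add]
  refine ⟨Nat.le_add_right _ _, j / d, ?_⟩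
  rw [add_assoc, Nat.mod_add_div']

namespace EventuallyPeriodic

variable {β : Type*} {f : ℕ → β} {t d : ℕ}

theorem apply_add_mul (hf : EventuallyPeriodic f t d) {x : ℕ} (hx : t ≤ x) (n : ℕ) :
    f (x + n * d) = f x := by
  induction n with
  | zero => simp
  | succ n ih => rw [Nat.succ_mul, ← add_assoc, hf _ (by lia), ih]

theorem apply_foldMod (hf : EventuallyPeriodic f t d) (x : ℕ) : f (foldMod t d x) = f x := by
  rcases le_total x t with hx | hx
  · rw [foldMod_of_le hx]
  · obtain ⟨hle, n, hn⟩ := exists_eq_foldMod_add_mul d hx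
    rw [← hf.apply_add_mul hle n, ← hn]

theorem apply_foldMod_add (hf : EventuallyPeriodic f (t + 1) d) (hd : 0 < d) {x : ℕ} (hx : t < x) :
    f (foldMod t d x + d) = f x := by
  obtain ⟨hle, n, hn⟩ := exists_eq_foldMod_add_mul d hx.le
  cases n with
  | zero =>
    rw [zero_mul, add_zero] at hn
    rw [← hn, hf x hx]
  | succ n =>
    rw [Nat.succ_mul, add_comm (n * d), ← add_assoc] at hn
    rw [← hf.apply_add_mul (show t + 1 ≤ foldMod t d x + d by lia) n, ← hn]

end EventuallyPeriodic

theorem Vis.eventuallyPeriodic_foldMod_shift (σ : Vis α) (t d : ℕ) :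
    EventuallyPeriodic (fun x => foldMod t d (σ.shift x)) (t + 1) d := by
  intro x hx
  have shift_add : σ.shift (x + d) = σ.shift x + d := by cases σ <;> simp only [shift] <;> lia
  have le_shift : t ≤ σ.shift x := by cases σ <;> simp only [shift] <;> lia
  simp only [shift_add, eventuallyPeriodic_foldMod t d _ le_shift]

/-- A deterministic counter machine whose transitions and acceptance may depend on the exact counter
value, with period `d` from the value `t` on: the deterministic counterpart of an `EOCA`. -/
structure DetEOCA (S α : Type*) where
  init : S
  accept : ℕ → Set S
  next : ℕ → Vis α → S → S
  t : ℕ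
  d : ℕ
  d_pos : 0 < d
  accept_periodic : EventuallyPeriodic accept t d
  next_periodic : EventuallyPeriodic next t d

namespace DetEOCA

variable {S : Type*} (M : DetEOCA S α)

/-- Acceptance of a visible word from state `s` and counter value `x`. -/
def Accepts : S → ℕ → List (Vis α) → Prop
  | s, x, [] => s ∈ M.accept x
  | s, x, σ :: v => σ.Enabled x ∧ Accepts (M.next x σ s) (σ.shift x) v

/-- The state of `toOCA` that represents state `s` of `M` at counter value `x`. -/
def pack (s : S) (x : ℕ) : S × Fin (M.t + M.d) :=
  (s, ⟨foldMod M.t M.d x, foldMod_lt M.d_pos x⟩)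

/-- The OCA that simulates `M` by storing the folded counter value in its state. -/
def toOCA : OCA (S × Fin (M.t + M.d)) α where
  init := M.pack M.init 0
  final := {c | c.1 ∈ M.accept c.2}
  m := M.t + 1
  -- The test `k ≤ t` separates `x = t` from larger `x` with the same folded value. In the latter
  -- case one period is added before applying `σ`, so that `dec` stays in the periodic range.
  Δ := {(c, k, σ, c') |
    c' = M.pack (M.next c.2 σ c.1) (σ.shift (if k ≤ M.t then c.2 else c.2 + M.d)) ∧ k ≤ M.t + 1}
  valid := fun _ h => h.2

theorem toOCA_deterministic : M.toOCA.Deterministic :=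
  fun _ _ _ hk => ⟨_, ⟨rfl, hk⟩, fun _ h => h.1⟩

theorem mem_toOCA_Δ_iff {s : S} {x : ℕ} {σ : Vis α} {c : S × Fin (M.t + M.d)} :
    (M.pack s x, min x M.toOCA.m, σ, c) ∈ M.toOCA.Δ ↔
      c = M.pack (M.next x σ s) (σ.shift x) := by
  have next_eq : M.next (foldMod M.t M.d x) = M.next x := M.next_periodic.apply_foldMod x
  have fold_eq : foldMod M.t M.d (σ.shift (if x ≤ M.t then foldMod M.t M.d x
      else foldMod M.t M.d x + M.d)) = foldMod M.t M.d (σ.shift x) := by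
    rcases le_or_gt x M.t with hx | hx
    · rw [if_pos hx, foldMod_of_le hx]
    · rw [if_neg hx.not_ge]
      exact (σ.eventuallyPeriodic_foldMod_shift M.t M.d).apply_foldMod_add M.d_pos hx
  simp [toOCA, pack, next_eq, fold_eq]

theorem toOCA_visAccepts_iff {s : S} {x : ℕ} {v : List (Vis α)} :
    M.toOCA.VisAccepts (M.pack s x, x) v ↔ M.Accepts s x v := by
  induction v generalizing s x with
  | nil =>
    change s ∈ M.accept (foldMod M.t M.d x) ↔ s ∈ M.accept x
    rw [M.accept_periodic.apply_foldMod]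
  | cons σ v ih => simp only [OCA.VisAccepts, Accepts, mem_toOCA_Δ_iff, exists_eq_left, ih]

theorem mem_toOCA_Lvis_iff {v : List (Vis α)} : v ∈ M.toOCA.Lvis ↔ M.Accepts M.init 0 v :=
  OCA.mem_Lvis_iff.trans M.toOCA_visAccepts_iff

end DetEOCA

/-! ### The subset construction along encodings -/

namespace OCA

variable {A : OCA Q α} {t d : ℕ}

/-- The states at level `y` silently reachable from a state in `T` at level `x`. -/
def silentImage (A : OCA Q α) (x y : ℕ) (T : Set Q) : Set Q :=
  {q | ∃ p ∈ T, A.Silent (p, x) (q, y)}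

/-- The states reached from `T` by silent steps followed by the letter `a` at level `x`. -/
def letterImage (A : OCA Q α) (x : ℕ) (a : α) (T : Set Q) : Set Q :=
  {q | ∃ p ∈ A.silentImage x x T, (p, min x A.m, .sym a, q) ∈ A.Δ}

/-- The transition function of the subset construction. The sign records the last letter read: `1`
for `inc`, `-1` for `dec` and `0` otherwise. Letters that break the encoding empty the subset. -/
def subsetNext (A : OCA Q α) (x : ℕ) : Vis α → Set Q × SignType → Set Q × SignType
  | .sym a, (T, _) => (A.letterImage x a T, 0)
  | .inc, (T, s) => ({q ∈ A.silentImage x (x + 1) T | s ≠ -1}, 1)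
  | .dec, (T, s) => ({q ∈ A.silentImage x (x - 1) T | s ≠ 1}, -1)

theorem IsSilentPeriod.subsetNext_periodic (h : A.IsSilentPeriod t d) :
    EventuallyPeriodic A.subsetNext (t + 1) d := by
  intro x hx
  have silentImage_add {x y : ℕ} (hx : t ≤ x) (hy : t ≤ y) :
      A.silentImage (x + d) (y + d) = A.silentImage x y := by
    funext T
    simp only [silentImage, h.silent_iff hx hy]
  have hm := h.m_le
  funext σ ⟨T, s⟩
  cases σ with
  | sym a =>
    simp only [subsetNext, letterImage, silentImage_add (show t ≤ x by lia) (show t ≤ x by lia),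
      show min (x + d) A.m = min x A.m by lia]
  | inc =>
    simp only [subsetNext, add_right_comm x d 1,
      silentImage_add (show t ≤ x by lia) (show t ≤ x + 1 by lia)]
  | dec =>
    simp only [subsetNext, show x + d - 1 = x - 1 + d by lia,
      silentImage_add (show t ≤ x by lia) (show t ≤ x - 1 by lia)]

/-- The deterministic machine that accepts the encodings of the words in `A.Lobs`. -/
def IsSilentPeriod.subsetMachine (h : A.IsSilentPeriod t d) : DetEOCA (Set Q × SignType) α where
  init := ({A.init}, 0)
  accept x := {(T, s) | s = 0 ∧ ∃ q ∈ T, A.CanFinish (q, x)}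
  next := A.subsetNext
  t := t + 1
  d := d
  d_pos := h.pos
  accept_periodic x hx := by simp only [h.canFinish_iff (show t ≤ x by lia)]
  next_periodic := h.subsetNext_periodic

theorem exists_mem_letterImage_iff {x : ℕ} {a : α} {T : Set Q} {w : List (α × ℕ)} :
    (∃ q ∈ A.letterImage x a T, A.ObsAccepts (q, x) w) ↔
      ∃ q ∈ T, A.ObsAccepts (q, x) ((a, x) :: w) := by
  simp only [letterImage, silentImage, ObsAccepts, Set.mem_ofPred_eq]
  tauto

theorem exists_mem_silentImage_iff {x y : ℕ} {T : Set Q} {o : α × ℕ} {w : List (α × ℕ)}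
    (ho : o ∈ w.head?) (hy : y ∈ Set.uIcc x o.2) :
    (∃ q ∈ A.silentImage x y T, A.ObsAccepts (q, y) w) ↔ ∃ q ∈ T, A.ObsAccepts (q, x) w := by
  simp only [silentImage, Set.mem_ofPred_eq, obsAccepts_iff_exists_silent ho hy]
  tauto

theorem exists_mem_silentImage_succ_iff {x : ℕ} {T : Set Q} {w : List (α × ℕ)}
    (hw : HeadsToward 1 (x + 1) w) :
    (∃ q ∈ A.silentImage x (x + 1) T, A.ObsAccepts (q, x + 1) w) ↔
      ∃ q ∈ T, A.ObsAccepts (q, x) w := by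
  obtain ⟨o, ho, hle⟩ := hw.1 rfl
  exact exists_mem_silentImage_iff ho (Set.mem_uIcc.2 (by lia))

theorem exists_mem_silentImage_pred_iff {x : ℕ} {T : Set Q} {w : List (α × ℕ)}
    (hw : HeadsToward (-1) (x - 1) w) :
    (∃ q ∈ A.silentImage x (x - 1) T, A.ObsAccepts (q, x - 1) w) ↔
      ∃ q ∈ T, A.ObsAccepts (q, x) w := by
  obtain ⟨o, ho, hle⟩ := hw.2 rfl
  exact exists_mem_silentImage_iff ho (Set.mem_uIcc.2 (by lia))

theorem IsSilentPeriod.subsetMachine_accepts_iff (h : A.IsSilentPeriod t d) {T : Set Q}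
    {s : SignType} {x : ℕ} {v : List (Vis α)} :
    h.subsetMachine.Accepts (T, s) x v ↔
      ∃ w, (HeadsToward s x w ∧ encFrom x w = v) ∧ ∃ q ∈ T, A.ObsAccepts (q, x) w := by
  induction v generalizing T s x with
  | nil =>
    simp only [headsToward_and_encFrom_eq_nil_iff, and_assoc, exists_and_left, exists_eq_left]
    rfl
  | cons σ v ih =>
    refine (and_congr_right fun _ => ih).trans ?_
    cases σ with
    | sym a =>
      simp only [headsToward_and_encFrom_eq_sym_cons_iff]
      constructor
      · rintro ⟨-, w, ⟨-, rfl⟩, hw⟩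
        exact ⟨_, ⟨w, rfl, rfl⟩, exists_mem_letterImage_iff.1 hw⟩
      · rintro ⟨_, ⟨w, rfl, rfl⟩, hw⟩
        exact ⟨trivial, w, ⟨headsToward_zero, rfl⟩, exists_mem_letterImage_iff.2 hw⟩
    | inc =>
      simp only [headsToward_and_encFrom_eq_inc_cons_iff]
      constructor
      · rintro ⟨-, w, ⟨hs, hv⟩, q, ⟨hq, hsgn⟩, hw⟩
        exact ⟨w, ⟨hsgn, hs, hv⟩, (exists_mem_silentImage_succ_iff hs).1 ⟨q, hq, hw⟩⟩
      · rintro ⟨w, ⟨hsgn, hs, hv⟩, hw⟩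
        obtain ⟨q, hq, hw⟩ := (exists_mem_silentImage_succ_iff hs).2 hw
        exact ⟨trivial, w, ⟨hs, hv⟩, q, ⟨hq, hsgn⟩, hw⟩
    | dec =>
      simp only [headsToward_and_encFrom_eq_dec_cons_iff]
      constructor
      · rintro ⟨hx, w, ⟨hs, hv⟩, q, ⟨hq, hsgn⟩, hw⟩
        exact ⟨w, ⟨hx, hsgn, hs, hv⟩, (exists_mem_silentImage_pred_iff hs).1 ⟨q, hq, hw⟩⟩
      · rintro ⟨w, ⟨hx, hsgn, hs, hv⟩, hw⟩
        obtain ⟨q, hq, hw⟩ := (exists_mem_silentImage_pred_iff hs).2 hw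
        exact ⟨hx, w, ⟨hs, hv⟩, q, ⟨hq, hsgn⟩, hw⟩

theorem IsSilentPeriod.subsetMachine_Lvis (h : A.IsSilentPeriod t d) :
    h.subsetMachine.toOCA.Lvis = enc '' A.Lobs := by
  ext v
  rw [DetEOCA.mem_toOCA_Lvis_iff]
  refine h.subsetMachine_accepts_iff.trans ?_
  simp [headsToward_zero, mem_Lobs_iff, enc, and_comm]

end OCA

theorem stmt14_general {α : Type*} {Q : Type u} [Finite Q] (A : OCA Q α) :
    ∃ (Q' : Type u) (_ : Fintype Q') (A' : OCA Q' α),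
      A'.Deterministic ∧ A'.Lobs = A.Lobs ∧ A'.Lvis ⊆ EncSet α := by
  obtain ⟨t, d, h⟩ := A.exists_isSilentPeriod
  have hvis := h.subsetMachine_Lvis
  refine ⟨_, Fintype.ofFinite _, h.subsetMachine.toOCA, h.subsetMachine.toOCA_deterministic,
    OCA.Lobs_eq_of_Lvis_eq_enc_image hvis, ?_⟩
  rw [hvis]
  exact Set.image_subset_range _ _

/-- determinizability wrt. the observability semantics: every
OCA can be transformed into a deterministic OCA with the same observability
semantics whose visibly semantics consists of valid encodings. -/
theorem stmt14 {α Q : Type} [Fintype α] [Nonempty α] [Fintype Q] (A : OCA Q α) :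
    ∃ (Q' : Type) (_ : Fintype Q') (A' : OCA Q' α),
      A'.Deterministic ∧ A'.Lobs = A.Lobs ∧ A'.Lvis ⊆ EncSet α :=
  stmt14_general A
end

section
/- For all c1, c2 ∈ ℕ and all d1, d2 ≥ 1, there exists a c1-OCA C over a two-letter alphabet {b1, b2} such that L_vis(C) = {inc^{x+y} b1 dec^{y} b2 : x ∈ {c1 + d1·k : k ∈ ℕ} and y ∈ {c2 + d2·k : k ∈ ℕ}}. -/
variable {Q α : Type*}

/-!
A finite automaton can follow the shape of a word over `α ∪ {inc, dec}` and, at the same time, the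
counter value modulo `d`. Together with the threshold test this residue decides whether the counter
lies in a set `X` that has period `d` beyond the threshold. Hence, for every regular language `R`,
an OCA can accept exactly the words `u b` such that `u ∈ R` can be executed and leaves the counter
in `X`. Executing `inc^n b₁ dec^y` leaves the counter at `n - y`, and these words with `y ∈ Y` form
a regular language when `Y` is ultimately periodic, so this language serves as `R`.
-/

section EventuallyPeriodic

variable {β : Type*} {f : ℕ → β} {m d : ℕ}

theorem apply_add_mul_of_eventually_periodic (hf : ∀ x, m ≤ x → f (x + d) = f x) {x : ℕ}
    (hx : m ≤ x) (k : ℕ) : f (x + d * k) = f x := by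
  induction k with
  | zero => simp
  | succ k ih => rw [Nat.mul_succ, ← Nat.add_assoc, hf _ (by omega), ih]

theorem apply_eq_of_min_eq_of_modEq (hf : ∀ x, m ≤ x → f (x + d) = f x) {x y : ℕ}
    (hmin : min x m = min y m) (hmod : x ≡ y [MOD d]) : f x = f y := by
  wlog hxy : x ≤ y generalizing x y
  · exact (this hmin.symm hmod.symm (by omega)).symm
  by_cases hx : m ≤ x
  · obtain ⟨k, hk⟩ := (Nat.modEq_iff_dvd' hxy).1 hmod
    obtain rfl : y = x + d * k := by omega
    exact (apply_add_mul_of_eventually_periodic hf hx k).symm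
  · obtain rfl : x = y := by omega
    rfl

theorem finite_range_of_eventually_periodic (hd : 1 ≤ d) (hf : ∀ x, m ≤ x → f (x + d) = f x) :
    (Set.range f).Finite := by
  refine ((Set.finite_Iio (m + d)).image f).subset ?_
  rintro _ ⟨n, rfl⟩
  induction n using Nat.strong_induction_on with
  | _ n ih =>
    by_cases hn : n < m + d
    · exact ⟨n, hn, rfl⟩
    · have hperiod := hf (n - d) (by omega)
      rw [Nat.sub_add_cancel (by omega)] at hperiod
      exact hperiod ▸ ih (n - d) (by omega)

end EventuallyPeriodic

theorem mem_progression_iff_add_mem (c d : ℕ) {x : ℕ} (hx : c ≤ x) :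
    x ∈ {n | ∃ k, n = c + d * k} ↔ x + d ∈ {n | ∃ k, n = c + d * k} := by
  constructor
  · rintro ⟨k, rfl⟩
    exact ⟨k + 1, by ring⟩
  · rintro ⟨_ | k, hk⟩
    · exact ⟨0, by omega⟩
    · exact ⟨k, by rw [Nat.mul_succ] at hk; omega⟩

theorem isRegular_of_finite_of_leftQuotient_mem {L : Language α} {F : Set (Language α)}
    (hF : F.Finite) (hL : L ∈ F) (hstep : ∀ K ∈ F, ∀ a, K.leftQuotient [a] ∈ F) :
    L.IsRegular := by
  refine .of_finite_range_leftQuotient (hF.subset ?_)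
  rintro _ ⟨w, rfl⟩
  induction w using List.reverseRecOn with
  | nil => exact hL
  | append_singleton w a ih => exact Language.leftQuotient_append L w [a] ▸ hstep _ ih a

section Counter

/-- The counter value after one letter, or `none` for a `dec` at counter value `0`. -/
def counterStep : ℕ → Vis α → Option ℕ
  | x, .sym _ => some x
  | x, .inc => some (x + 1)
  | 0, .dec => none
  | x + 1, .dec => some x

/-- The counter value reached from `x` by executing a word of the visibly semantics, or `none` if
some `dec` is blocked. -/
def counterFrom (x : ℕ) (w : List (Vis α)) : Option ℕ := w.foldlM counterStep x

/-- The effect of a letter on the counter, as an integer. -/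
def Vis.weight : Vis α → ℤ
  | .sym _ => 0
  | .inc => 1
  | .dec => -1

theorem add_weight_of_counterStep_eq_some {x y : ℕ} {σ : Vis α} (h : counterStep x σ = some y) :
    (x : ℤ) + σ.weight = y := by
  rcases σ with a | _ | _ <;> cases x <;> simp_all [counterStep, Vis.weight] <;> omega

theorem counterFrom_append (x : ℕ) (u v : List (Vis α)) :
    counterFrom x (u ++ v) = (counterFrom x u).bind (counterFrom · v) :=
  List.foldlM_append

theorem counterFrom_append_singleton_eq_some {x z : ℕ} {u : List (Vis α)} {σ : Vis α} :
    counterFrom x (u ++ [σ]) = some z ↔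
      ∃ y, counterFrom x u = some y ∧ counterStep y σ = some z := by
  rw [counterFrom_append, Option.bind_eq_some_iff]
  simp only [counterFrom, List.foldlM_cons, List.foldlM_nil, bind_pure]

theorem counterFrom_replicate_inc (x n : ℕ) :
    counterFrom x (List.replicate n (Vis.inc : Vis α)) = some (x + n) := by
  induction n generalizing x with
  | zero => rfl
  | succ n ih => exact (ih (x + 1)).trans (congrArg some (by omega))

theorem counterFrom_replicate_dec_eq_some {x y z : ℕ} :
    counterFrom x (List.replicate y (Vis.dec : Vis α)) = some z ↔ x = z + y := by
  induction y generalizing x with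
  | zero => simp [counterFrom]
  | succ y ih =>
    cases x with
    | zero => simp [counterFrom, List.replicate_succ, counterStep]
    | succ x => exact ih.trans (by omega)

theorem counterFrom_zero_peak_eq_some {n y z : ℕ} {b : α} :
    counterFrom 0 (List.replicate n Vis.inc ++ Vis.sym b :: List.replicate y Vis.dec) = some z ↔
      n = z + y := by
  rw [counterFrom_append, counterFrom_replicate_inc, Nat.zero_add]
  exact counterFrom_replicate_dec_eq_some

end Counter

namespace OCA

/-- The configuration graph of an OCA, as an infinite-state automaton over `α ∪ {inc, dec}`. -/
def configNFA (A : OCA Q α) : NFA (Vis α) (Q × ℕ) where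
  step c σ := {c' | counterStep c.2 σ = some c'.2 ∧ (c.1, min c.2 A.m, σ, c'.1) ∈ A.Δ}
  start := {(A.init, 0)}
  accept := {c | c.1 ∈ A.final}

theorem mem_configNFA_step_iff {A : OCA Q α} {c c' : Q × ℕ} {σ : Vis α} :
    c' ∈ A.configNFA.step c σ ↔ ∃ τ, visOf τ = σ ∧ A.step c τ c' := by
  obtain ⟨q, x⟩ := c
  obtain ⟨q', x'⟩ := c'
  constructor
  · rintro ⟨hx, hΔ⟩
    rcases σ with a | _ | _
    · exact ⟨.sym (a, x), rfl, rfl, (Option.some.inj hx).symm, hΔ⟩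
    · exact ⟨.inc, rfl, (Option.some.inj hx).symm, hΔ⟩
    · cases x with
      | zero => cases hx
      | succ x => exact ⟨.dec, rfl, by omega, (Option.some.inj hx).symm, hΔ⟩
  · rintro ⟨⟨a, y⟩ | _ | _, rfl, hstep⟩
    · obtain ⟨-, rfl, hΔ⟩ := hstep
      exact ⟨rfl, hΔ⟩
    · obtain ⟨rfl, hΔ⟩ := hstep
      exact ⟨rfl, hΔ⟩
    · obtain ⟨hx, rfl, hΔ⟩ := hstep
      obtain ⟨x, rfl⟩ := Nat.exists_eq_add_of_le' hx
      exact ⟨rfl, hΔ⟩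

theorem RunFrom.ne_nil {A : OCA Q α} {c : Q × ℕ} {ts : List (Vis (α × ℕ))} {cs : List (Q × ℕ)}
    (h : A.RunFrom c ts cs) : cs ≠ [] := by
  cases h <;> exact List.cons_ne_nil _ _

theorem RunFrom.nonempty_path {A : OCA Q α} {c e : Q × ℕ} {ts : List (Vis (α × ℕ))}
    {cs : List (Q × ℕ)} (h : A.RunFrom c ts cs) (he : cs.getLast? = some e) :
    Nonempty (A.configNFA.Path c e (visMap ts)) := by
  induction h with
  | nil c =>
    obtain rfl : c = e := Option.some.inj he
    exact ⟨.nil c⟩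
  | cons hstep hrun ih =>
    rw [List.getLast?_cons_of_ne_nil hrun.ne_nil] at he
    obtain ⟨path⟩ := ih he
    exact ⟨.cons _ _ _ _ _ (mem_configNFA_step_iff.2 ⟨_, rfl, hstep⟩) path⟩

theorem exists_runFrom_of_path {A : OCA Q α} {c e : Q × ℕ} {w : List (Vis α)}
    (path : A.configNFA.Path c e w) :
    ∃ ts cs, A.RunFrom c ts cs ∧ cs.getLast? = some e ∧ visMap ts = w := by
  induction path with
  | nil c => exact ⟨[], [c], .nil c, rfl, rfl⟩
  | cons c' c e σ w hstep path ih =>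
    obtain ⟨τ, rfl, hτ⟩ := mem_configNFA_step_iff.1 hstep
    obtain ⟨ts, cs, hrun, hlast, rfl⟩ := ih
    exact ⟨τ :: ts, _, .cons hτ hrun,
      (List.getLast?_cons_of_ne_nil hrun.ne_nil).trans hlast, rfl⟩

theorem Lvis_eq_accepts_configNFA (A : OCA Q α) : A.Lvis = A.configNFA.accepts := by
  ext w
  refine Iff.trans ?_ NFA.accepts_iff_exists_path.symm
  constructor
  · rintro ⟨ts, ⟨cs, e, hrun, hlast, hfinal⟩, rfl⟩
    exact ⟨(A.init, 0), rfl, e, hfinal, hrun.nonempty_path hlast⟩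
  · rintro ⟨_, rfl, e, hfinal, ⟨path⟩⟩
    obtain ⟨ts, cs, hrun, hlast, hw⟩ := exists_runFrom_of_path path
    exact ⟨ts, ⟨cs, e, hrun, hlast, hfinal⟩, hw⟩

section Tracker

variable {S : Type*} (M : DFA (Vis α) S) (m d : ℕ) (X : Set ℕ) (b : α)

/-- The `m`-OCA that simulates `M` while tracking the counter value modulo `d`, and moves on `b` to
the final state `none` when `M` accepts and some element of `X` is indistinguishable from the
counter value by its residue and the threshold test. -/
def tracker : OCA (Option (ZMod d × S)) α where
  init := some (0, M.start)
  final := {none}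
  m := m
  Δ := {t | ∃ r s k σ, k ≤ m ∧
      t = (some (r, s), k, σ, some (r + (σ.weight : ZMod d), M.step s σ))} ∪
    {t | ∃ x ∈ X, ∃ s ∈ M.accept, t = (some ((x : ZMod d), s), min x m, .sym b, none)}
  valid := by
    rintro t (⟨r, s, k, σ, hk, ht⟩ | ⟨x, -, s, -, ht⟩)
    · exact ht ▸ hk
    · exact ht ▸ min_le_right x m

variable {M m d X b}

theorem some_mem_tracker_step_iff {c : Option (ZMod d × S) × ℕ} {q : ZMod d × S} {y : ℕ}
    {σ : Vis α} :
    (some q, y) ∈ (tracker M m d X b).configNFA.step c σ ↔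
      ∃ p, c.1 = some p ∧ counterStep c.2 σ = some y ∧
        q = (p.1 + (σ.weight : ZMod d), M.step p.2 σ) := by
  obtain ⟨p, x⟩ := c
  constructor
  · rintro ⟨hx, ⟨r, s, k, τ, -, heq⟩ | ⟨_, -, s, -, heq⟩⟩
    · simp only [Prod.mk.injEq, Option.some.injEq] at heq
      obtain ⟨rfl, -, rfl, rfl⟩ := heq
      exact ⟨(r, s), rfl, hx, rfl⟩
    · simp at heq
  · rintro ⟨⟨r, s⟩, rfl, hx, rfl⟩
    exact ⟨hx, .inl ⟨r, s, _, σ, min_le_right x m, rfl⟩⟩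

theorem none_mem_tracker_step_iff {c : Option (ZMod d × S) × ℕ} {y : ℕ} {σ : Vis α} :
    (none, y) ∈ (tracker M m d X b).configNFA.step c σ ↔
      σ = .sym b ∧ y = c.2 ∧ ∃ x ∈ X, min c.2 m = min x m ∧
        ∃ s ∈ M.accept, c.1 = some ((x : ZMod d), s) := by
  obtain ⟨p, x⟩ := c
  constructor
  · rintro ⟨hx, ⟨r, s, k, τ, -, heq⟩ | ⟨x', hx', s, hs, heq⟩⟩
    · cases heq
    · simp only [Prod.mk.injEq] at heq
      obtain ⟨rfl, hmin, rfl, -⟩ := heq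
      exact ⟨rfl, (Option.some.inj hx).symm, x', hx', hmin, s, hs, rfl⟩
  · rintro ⟨rfl, rfl, x', hx', hmin, s, hs, rfl⟩
    exact ⟨rfl, .inr ⟨x', hx', s, hs, by rw [← hmin]; rfl⟩⟩

theorem some_mem_eval_tracker_iff {p : ZMod d × S} {x : ℕ} {u : List (Vis α)} :
    (some p, x) ∈ (tracker M m d X b).configNFA.eval u ↔
      counterFrom 0 u = some x ∧ p = ((x : ZMod d), M.eval u) := by
  induction u using List.reverseRecOn generalizing p x with
  | nil =>
    constructor
    · intro h
      obtain ⟨hp, rfl⟩ := Prod.mk.inj h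
      exact ⟨rfl, (Option.some.inj hp).trans (by simp)⟩
    · rintro ⟨hx, rfl⟩
      obtain rfl : 0 = x := Option.some.inj hx
      simp [configNFA, tracker]
  | append_singleton u σ ih =>
    have residue {y : ℕ} (hy : counterStep y σ = some x) : (y : ZMod d) + σ.weight = x := by
      exact_mod_cast congrArg (Int.cast : ℤ → ZMod d) (add_weight_of_counterStep_eq_some hy)
    rw [NFA.eval_append_singleton, NFA.mem_stepSet, DFA.eval_append_singleton,
      counterFrom_append_singleton_eq_some]
    constructor
    · rintro ⟨⟨_, y⟩, hy, hstep⟩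
      obtain ⟨p, rfl, hyx, rfl⟩ := some_mem_tracker_step_iff.1 hstep
      obtain ⟨hu, rfl⟩ := ih.1 hy
      exact ⟨⟨y, hu, hyx⟩, by rw [residue hyx]⟩
    · rintro ⟨⟨y, hu, hyx⟩, rfl⟩
      exact ⟨(some ((y : ZMod d), M.eval u), y), ih.2 ⟨hu, rfl⟩,
        some_mem_tracker_step_iff.2 ⟨_, rfl, hyx, by rw [residue hyx]⟩⟩

theorem none_mem_eval_tracker_iff (hX : ∀ x, m ≤ x → (x ∈ X ↔ x + d ∈ X)) {x : ℕ}
    {w : List (Vis α)} :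
    (none, x) ∈ (tracker M m d X b).configNFA.eval w ↔
      ∃ u ∈ M.accepts, counterFrom 0 u = some x ∧ x ∈ X ∧ w = u ++ [.sym b] := by
  constructor
  · intro h
    induction w using List.reverseRecOn with
    | nil => cases h
    | append_singleton u σ =>
      rw [NFA.eval_append_singleton, NFA.mem_stepSet] at h
      obtain ⟨⟨_, y⟩, hy, hstep⟩ := h
      obtain ⟨rfl, rfl, x', hx', hmin, s, hs, rfl⟩ := none_mem_tracker_step_iff.1 hstep
      obtain ⟨hu, heq⟩ := some_mem_eval_tracker_iff.1 hy
      obtain ⟨hmod, rfl⟩ := Prod.mk.inj heq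
      have hmem : (x' ∈ X) = (x ∈ X) :=
        apply_eq_of_min_eq_of_modEq (f := (· ∈ X)) (fun x hx => propext (hX x hx).symm)
          hmin.symm ((ZMod.natCast_eq_natCast_iff _ _ _).1 hmod)
      exact ⟨u, hs, hu, hmem.mp hx', rfl⟩
  · rintro ⟨u, hu, hcounter, hx, rfl⟩
    rw [NFA.eval_append_singleton, NFA.mem_stepSet]
    exact ⟨(some ((x : ZMod d), M.eval u), x), some_mem_eval_tracker_iff.2 ⟨hcounter, rfl⟩,
      none_mem_tracker_step_iff.2 ⟨rfl, rfl, x, hx, rfl, _, hu, rfl⟩⟩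

theorem Lvis_tracker (hX : ∀ x, m ≤ x → (x ∈ X ↔ x + d ∈ X)) :
    (tracker M m d X b).Lvis =
      {w | ∃ u ∈ M.accepts, ∃ x ∈ X, counterFrom 0 u = some x ∧ w = u ++ [.sym b]} := by
  rw [Lvis_eq_accepts_configNFA]
  ext w
  constructor
  · rintro ⟨⟨_, x⟩, rfl, h⟩
    obtain ⟨u, hu, hcounter, hx, hw⟩ := (none_mem_eval_tracker_iff hX).1 h
    exact ⟨u, hu, x, hx, hcounter, hw⟩
  · rintro ⟨u, hu, x, hx, hcounter, hw⟩
    exact ⟨(none, x), rfl, (none_mem_eval_tracker_iff hX).2 ⟨u, hu, hcounter, hx, hw⟩⟩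

end Tracker

end OCA

theorem exists_oca_Lvis_eq_of_isRegular {R : Language (Vis α)} (hR : R.IsRegular) (b : α)
    {X : Set ℕ} {m d : ℕ} (hd : 1 ≤ d) (hX : ∀ x, m ≤ x → (x ∈ X ↔ x + d ∈ X)) :
    ∃ (Q : Type) (_ : Fintype Q) (C : OCA Q α),
      C.m = m ∧
      C.Lvis = {w | ∃ u ∈ R, ∃ x ∈ X, counterFrom 0 u = some x ∧ w = u ++ [.sym b]} := by
  obtain ⟨S, _, M, rfl⟩ := hR
  have : NeZero d := ⟨by omega⟩
  exact ⟨_, inferInstance, OCA.tracker M m d X b, rfl, OCA.Lvis_tracker hX⟩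

section Peaks

/-- The words `dec^z` with `k + z ∈ Y`. -/
def descents (α : Type*) (Y : Set ℕ) (k : ℕ) : Language (Vis α) :=
  {u | ∃ z, k + z ∈ Y ∧ u = List.replicate z Vis.dec}

/-- The words `inc^n b dec^y` with `n` arbitrary and `y ∈ Y`. -/
def peaks (b : α) (Y : Set ℕ) : Language (Vis α) :=
  {u | ∃ n, ∃ y ∈ Y, u = List.replicate n Vis.inc ++ Vis.sym b :: List.replicate y Vis.dec}

theorem finite_range_descents {Y : Set ℕ} (hY : UltPeriodic Y) :
    (Set.range (descents α Y)).Finite := by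
  obtain ⟨t, d, hd, hY⟩ := hY
  refine finite_range_of_eventually_periodic hd (m := t) fun k hk => ?_
  have hmem (z : ℕ) : k + d + z ∈ Y ↔ k + z ∈ Y := by
    rw [hY (k + z) (by omega), Nat.add_right_comm]
  exact Set.ext fun u => exists_congr fun z => and_congr_left' (hmem z)

theorem leftQuotient_descents (Y : Set ℕ) (k : ℕ) (σ : Vis α) :
    (descents α Y k).leftQuotient [σ] = descents α Y (k + 1) ∨
      (descents α Y k).leftQuotient [σ] = 0 := by
  rcases σ with a | _ | _
  · refine .inr (Set.eq_empty_of_forall_notMem ?_)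
    rintro u ⟨_ | z, -, h⟩ <;> cases h
  · refine .inr (Set.eq_empty_of_forall_notMem ?_)
    rintro u ⟨_ | z, -, h⟩ <;> cases h
  · refine .inl (Set.ext fun u => ⟨?_, ?_⟩)
    · rintro ⟨_ | z, hz, h⟩
      · cases h
      · exact ⟨z, by rwa [Nat.add_right_comm], List.tail_eq_of_cons_eq h⟩
    · rintro ⟨z, hz, rfl⟩
      exact ⟨z + 1, by rwa [← Nat.add_assoc, Nat.add_right_comm], rfl⟩

theorem leftQuotient_peaks (b : α) (Y : Set ℕ) (σ : Vis α) :
    (peaks b Y).leftQuotient [σ] = peaks b Y ∨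
      (peaks b Y).leftQuotient [σ] = descents α Y 0 ∨ (peaks b Y).leftQuotient [σ] = 0 := by
  rcases σ with a | _ | _
  · right
    by_cases hab : a = b
    · subst hab
      refine .inl (Set.ext fun u => ⟨?_, ?_⟩)
      · rintro ⟨_ | n, y, hy, h⟩
        · exact ⟨y, by rwa [Nat.zero_add], List.tail_eq_of_cons_eq h⟩
        · cases h
      · rintro ⟨y, hy, rfl⟩
        exact ⟨0, y, by rwa [Nat.zero_add] at hy, rfl⟩
    · refine .inr (Set.eq_empty_of_forall_notMem ?_)
      rintro u ⟨_ | n, y, -, h⟩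
      · exact hab (Vis.sym.inj (List.head_eq_of_cons_eq h))
      · cases h
  · refine .inl (Set.ext fun u => ⟨?_, ?_⟩)
    · rintro ⟨_ | n, y, hy, h⟩
      · cases h
      · exact ⟨n, y, hy, List.tail_eq_of_cons_eq h⟩
    · rintro ⟨n, y, hy, rfl⟩
      exact ⟨n + 1, y, hy, rfl⟩
  · refine .inr (.inr (Set.eq_empty_of_forall_notMem ?_))
    rintro u ⟨_ | n, y, -, h⟩ <;> cases h

theorem isRegular_peaks (b : α) {Y : Set ℕ} (hY : UltPeriodic Y) : (peaks b Y).IsRegular := by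
  refine isRegular_of_finite_of_leftQuotient_mem
    (F := {peaks b Y, 0} ∪ Set.range (descents α Y))
    ((Set.toFinite _).union (finite_range_descents hY)) (by simp) ?_
  rintro K ((rfl | rfl) | ⟨k, rfl⟩) σ
  · rcases leftQuotient_peaks b Y σ with h | h | h <;> simp [h]
  · exact .inl (.inr rfl)
  · rcases leftQuotient_descents Y k σ with h | h <;> simp [h]

end Peaks

theorem stmt17_general (b₁ b₂ : α) {X Y : Set ℕ} {m d : ℕ} (hd : 1 ≤ d)
    (hX : ∀ x, m ≤ x → (x ∈ X ↔ x + d ∈ X)) (hY : UltPeriodic Y) :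
    ∃ (Q : Type) (_ : Fintype Q) (C : OCA Q α),
      C.m = m ∧
      C.Lvis = {w | ∃ x y : ℕ, x ∈ X ∧ y ∈ Y ∧
        w = List.replicate (x + y) Vis.inc ++ Vis.sym b₁ ::
            (List.replicate y Vis.dec ++ [Vis.sym b₂])} := by
  obtain ⟨Q, hQ, C, hm, hC⟩ := exists_oca_Lvis_eq_of_isRegular (isRegular_peaks b₁ hY) b₂ hd hX
  refine ⟨Q, hQ, C, hm, hC.trans (Set.ext fun w => ?_)⟩
  constructor
  · rintro ⟨_, ⟨n, y, hy, rfl⟩, x, hx, hcounter, rfl⟩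
    obtain rfl := counterFrom_zero_peak_eq_some.1 hcounter
    exact ⟨x, y, hx, hy, by simp⟩
  · rintro ⟨x, y, hx, hy, rfl⟩
    exact ⟨_, ⟨x + y, y, hy, rfl⟩, x, hx, counterFrom_zero_peak_eq_some.2 rfl, by simp⟩

/-- for arithmetic progressions `c1 + d1·ℕ` and `c2 + d2·ℕ`
(with `d1, d2 ≥ 1`), there is a `c1`-OCA over the two-letter alphabet `Bool`
(where `b1 := true` and `b2 := false`) whose visibly semantics is
`{inc^(x+y) b1 dec^y b2 : x ∈ c1 + d1·ℕ, y ∈ c2 + d2·ℕ}`. -/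
theorem stmt17 (c1 c2 d1 d2 : ℕ) (hd1 : 1 ≤ d1) (hd2 : 1 ≤ d2) :
    ∃ (Q : Type) (_ : Fintype Q) (C : OCA Q Bool),
      C.m = c1 ∧
      C.Lvis = {w | ∃ x y : ℕ,
        (∃ k : ℕ, x = c1 + d1 * k) ∧ (∃ k : ℕ, y = c2 + d2 * k) ∧
        w = List.replicate (x + y) Vis.inc ++ Vis.sym true ::
            (List.replicate y Vis.dec ++ [Vis.sym false])} := by
  exact stmt17_general true false hd1 (fun _ => mem_progression_iff_add_mem c1 d1)
    ⟨c2, d2, hd2, fun _ => mem_progression_iff_add_mem c2 d2⟩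
end

section
/- Let Γ = {□, b, c} be a three-letter alphabet and let L be a regular language over Γ (i.e., L is accepted by some deterministic finite automaton with finitely many states) such that L ⊆ {□^x b □^y c : x, y ∈ ℕ}. Then there exist n ∈ ℕ and natural numbers c1_j, d1_j, c2_j, d2_j for 1 ≤ j ≤ n such that L = ⋃_{j=1}^{n} {□^x b □^y c : x ∈ {c1_j + d1_j·k : k ∈ ℕ} and y ∈ {c2_j + d2_j·k : k ∈ ℕ}}. -/
variable {Q α : Type*}

/-! A letter acts on the finitely many states of an automaton by a map whose iterates are eventually
periodic, so `ℕ` is covered by finitely many arithmetic progressions on each of which the iterate is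
constant. Whether `aˣ u bʸ v` is accepted depends only on the `x`-th iterate of the action of `a`
and the `y`-th iterate of the action of `b`, hence only on a progression containing `x` and one
containing `y`. -/

/-- The arithmetic progression `c + d ℕ`, for describing the exponents of words in a regular
language. The common difference may be `0`, in which case it is the singleton `{c}`. -/
def arithProg (c d : ℕ) : Set ℕ :=
  {x | ∃ k, x = c + d * k}

/-- A finite cover of `ℕ` by arithmetic progressions on each of which the sequence `g` is constant.
It reduces a property of `g` to finitely many cases. A pair `(c, d)` stands for `c + d ℕ`. -/
structure IsArithProgCover {β : Type*} (g : ℕ → β) (s : Finset (ℕ × ℕ)) : Prop where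
  exists_mem : ∀ x, ∃ q ∈ s, x ∈ arithProg q.1 q.2
  apply_eq : ∀ q ∈ s, ∀ x ∈ arithProg q.1 q.2, g x = g q.1

theorem exists_isArithProgCover_of_periodic_add {β : Type*} {g : ℕ → β} {t p : ℕ} (hp : 0 < p)
    (hg : Function.Periodic (fun n ↦ g (t + n)) p) : ∃ s, IsArithProgCover g s := by
  classical
  refine ⟨(Finset.range t).image (fun c ↦ (c, 0)) ∪
    (Finset.range p).image (fun r ↦ (t + r, p)), ⟨fun x ↦ ?_, fun q hq x hx ↦ ?_⟩⟩
  · rcases lt_or_ge x t with hxt | hxt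
    · exact ⟨(x, 0), by simp [hxt], 0, rfl⟩
    · obtain ⟨n, rfl⟩ := Nat.exists_eq_add_of_le hxt
      refine ⟨(t + n % p, p), by simp [Nat.mod_lt n hp], n / p, ?_⟩
      rw [add_assoc, Nat.mod_add_div]
  · obtain ⟨k, rfl⟩ := hx
    rcases Finset.mem_union.mp hq with hq | hq
    · obtain ⟨c, -, rfl⟩ := Finset.mem_image.mp hq
      simp
    · obtain ⟨r, -, rfl⟩ := Finset.mem_image.mp hq
      simpa [add_assoc, mul_comm] using hg.nsmul k r

theorem IsArithProgCover.exists_finset_rel_iff {β γ : Type*} {g : ℕ → β} {h : ℕ → γ}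
    {s s' : Finset (ℕ × ℕ)} (hg : IsArithProgCover g s) (hh : IsArithProgCover h s')
    (P : β → γ → Prop) :
    ∃ r : Finset ((ℕ × ℕ) × (ℕ × ℕ)), ∀ x y, P (g x) (h y) ↔
      ∃ q ∈ r, x ∈ arithProg q.1.1 q.1.2 ∧ y ∈ arithProg q.2.1 q.2.2 := by
  classical
  refine ⟨(s ×ˢ s').filter fun q ↦ P (g q.1.1) (h q.2.1), fun x y ↦ ⟨fun hP ↦ ?_, ?_⟩⟩
  · obtain ⟨a, ha, hxa⟩ := hg.exists_mem x
    obtain ⟨b, hb, hyb⟩ := hh.exists_mem y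
    rw [hg.apply_eq a ha x hxa, hh.apply_eq b hb y hyb] at hP
    exact ⟨(a, b), Finset.mem_filter.mpr ⟨Finset.mk_mem_product ha hb, hP⟩, hxa, hyb⟩
  · rintro ⟨⟨a, b⟩, hq, hxa, hyb⟩
    obtain ⟨hab, hP⟩ := Finset.mem_filter.mp hq
    obtain ⟨ha, hb⟩ := Finset.mem_product.mp hab
    rwa [hg.apply_eq a ha x hxa, hh.apply_eq b hb y hyb]

theorem exists_periodic_iterate_add {σ : Type*} [Finite σ] (f : σ → σ) :
    ∃ t p, 0 < p ∧ Function.Periodic (fun n ↦ f^[t + n]) p := by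
  obtain ⟨i, j, hij, hf⟩ : ∃ i j, i < j ∧ f^[i] = f^[j] :=
    Set.finite_univ.exists_lt_map_eq_of_forall_mem fun n ↦ Set.mem_univ f^[n]
  refine ⟨i, j - i, Nat.sub_pos_of_lt hij, fun n ↦ ?_⟩
  calc f^[i + (n + (j - i))] = f^[n + j] := by congr 1; omega
    _ = f^[i + n] := by rw [Function.iterate_add, ← hf, ← Function.iterate_add, add_comm]

theorem exists_isArithProgCover_iterate {σ : Type*} [Finite σ] (f : σ → σ) :
    ∃ s, IsArithProgCover (fun n ↦ f^[n]) s :=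
  let ⟨_, _, hp, hf⟩ := exists_periodic_iterate_add f
  exists_isArithProgCover_of_periodic_add hp hf

theorem evalFrom_replicate {σ : Type*} (M : DFA α σ) (s : σ) (n : ℕ) (a : α) :
    M.evalFrom s (List.replicate n a) = (fun s ↦ M.step s a)^[n] s := by
  induction n generalizing s with
  | zero => rfl
  | succ n ih => rw [List.replicate_succ, DFA.evalFrom_cons, ih, Function.iterate_succ_apply]

theorem replicate_append_mem_accepts_iff {σ : Type*} (M : DFA α σ) (a b : α) (u v : List α)
    (x y : ℕ) :
    List.replicate x a ++ u ++ List.replicate y b ++ v ∈ M.accepts ↔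
      M.evalFrom ((fun s ↦ M.step s b)^[y]
        (M.evalFrom ((fun s ↦ M.step s a)^[x] M.start) u)) v ∈ M.accept := by
  simp only [DFA.mem_accepts, DFA.eval, DFA.evalFrom_of_append, evalFrom_replicate]

theorem exists_finset_replicate_append_mem_iff {L : Language α} (hL : L.IsRegular) (a b : α)
    (u v : List α) :
    ∃ r : Finset ((ℕ × ℕ) × (ℕ × ℕ)), ∀ x y,
      List.replicate x a ++ u ++ List.replicate y b ++ v ∈ L ↔
        ∃ q ∈ r, x ∈ arithProg q.1.1 q.1.2 ∧ y ∈ arithProg q.2.1 q.2.2 := by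
  obtain ⟨σ, _, M, rfl⟩ := hL
  obtain ⟨s, hs⟩ := exists_isArithProgCover_iterate fun s ↦ M.step s a
  obtain ⟨s', hs'⟩ := exists_isArithProgCover_iterate fun s ↦ M.step s b
  simp only [replicate_append_mem_accepts_iff]
  exact hs.exists_finset_rel_iff hs' fun F G ↦
    M.evalFrom (G (M.evalFrom (F M.start) u)) v ∈ M.accept

theorem stmt18_general {L : Language α} (hreg : L.IsRegular) (a b : α) (u v : List α)
    (hL : ∀ w ∈ L, ∃ x y : ℕ, w = List.replicate x a ++ u ++ List.replicate y b ++ v) :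
    ∃ (n : ℕ) (c1 d1 c2 d2 : Fin n → ℕ),
      ∀ w : List α,
        w ∈ L ↔ ∃ j : Fin n, ∃ x y : ℕ,
          (∃ k : ℕ, x = c1 j + d1 j * k) ∧ (∃ k : ℕ, y = c2 j + d2 j * k) ∧
          w = List.replicate x a ++ u ++ List.replicate y b ++ v := by
  obtain ⟨r, hr⟩ := exists_finset_replicate_append_mem_iff hreg a b u v
  let e := r.equivFin.symm
  refine ⟨r.card, fun j ↦ (e j).1.1.1, fun j ↦ (e j).1.1.2, fun j ↦ (e j).1.2.1,
    fun j ↦ (e j).1.2.2, fun w ↦ ⟨fun hw ↦ ?_, ?_⟩⟩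
  · obtain ⟨x, y, rfl⟩ := hL w hw
    obtain ⟨q, hq, hx, hy⟩ := (hr x y).mp hw
    obtain ⟨j, rfl⟩ : ∃ j, (e j).1 = q := ⟨e.symm ⟨q, hq⟩, by simp⟩
    exact ⟨j, x, y, hx, hy, rfl⟩
  · rintro ⟨j, x, y, hx, hy, rfl⟩
    exact (hr x y).mpr ⟨(e j).1, (e j).2, hx, hy⟩

/-- a regular language contained in `{□^x b □^y c : x,y ∈ ℕ}`
(over the three-letter alphabet `Fin 3`, with `□ := 0`, `b := 1`, `c := 2`)
is a finite union of languages
`{□^x b □^y c : x ∈ c1_j + d1_j·ℕ, y ∈ c2_j + d2_j·ℕ}`. -/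
theorem stmt18 (L : Language (Fin 3))
    (hreg : ∃ (S : Type) (_ : Fintype S) (M : DFA (Fin 3) S), M.accepts = L)
    (hL : ∀ w ∈ L, ∃ x y : ℕ,
        w = List.replicate x (0 : Fin 3) ++ [1] ++ List.replicate y 0 ++ [2]) :
    ∃ (n : ℕ) (c1 d1 c2 d2 : Fin n → ℕ),
      ∀ w : List (Fin 3),
        w ∈ L ↔ ∃ j : Fin n, ∃ x y : ℕ,
          (∃ k : ℕ, x = c1 j + d1 j * k) ∧ (∃ k : ℕ, y = c2 j + d2 j * k) ∧
          w = List.replicate x (0 : Fin 3) ++ [1] ++ List.replicate y 0 ++ [2] :=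
  stmt18_general hreg 0 0 [1] [2] hL
end
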